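/- Let n ≥ 5 and L = L(β₃,…,β_{n−1},γ) ∈ SLbₙ. If γ = 0 and βᵢ = 0 for all 3 ≤ i ≤ n−1, then dim Der(L) = n + 2. -/

import Mathlib

open scoped BigOperators

/-- The bilinear multiplication on `Fin n → ℂ` determined by structure constants
`c i j k` = coefficient of the basis vector `e k` in the product `[e i, e j]`
of basis vectors (all indices zero-based). -/
noncomputable def structMul (n : ℕ) (c : Fin n → Fin n → Fin n → ℂ) :
    (Fin n → ℂ) →ₗ[ℂ] (Fin n → ℂ) →ₗ[ℂ] (Fin n → ℂ) :=
  LinearMap.mk₂ ℂ (fun x y k => ∑ i, ∑ j, x i * y j * c i j k)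
    (by
      intro x x' y; funext k
      simp [add_mul, Finset.sum_add_distrib])
    (by
      intro a x y; funext k
      simp [Finset.mul_sum, mul_assoc])
    (by
      intro x y y'; funext k
      simp [mul_add, add_mul, Finset.sum_add_distrib])
    (by
      intro a x y; funext k
      simp only [Pi.smul_apply, smul_eq_mul, Finset.mul_sum]
      congr 1; funext i; congr 1; funext j; ring)

/-- The space of derivations of the algebra `(Fin n → ℂ, μ)`:
linear endomorphisms `d` with `d [x,y] = [d x, y] + [x, d y]`. -/
noncomputable def derivations (n : ℕ)
    (μ : (Fin n → ℂ) →ₗ[ℂ] (Fin n → ℂ) →ₗ[ℂ] (Fin n → ℂ)) :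
    Submodule ℂ (Module.End ℂ (Fin n → ℂ)) where
  carrier := {d | ∀ x y, d (μ x y) = μ (d x) y + μ x (d y)}
  add_mem' := by
    intro a b ha hb x y
    simp only [LinearMap.add_apply, ha x y, hb x y, map_add]
    abel
  zero_mem' := by intro x y; simp
  smul_mem' := by
    intro t a ha x y
    simp only [LinearMap.smul_apply, ha x y, map_smul, smul_add]

/-- Structure constants of `L(β₃,…,β_{n-1},γ) ∈ SLbₙ`:
`[e₁,e₁] = e₃`; `[eᵢ,e₁] = e_{i+1}` for `3 ≤ i ≤ n-1`;
`[e₁,e₂] = β₃e₄ + ⋯ + β_{n-1}eₙ`; `[e₂,e₂] = γeₙ`;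
`[eⱼ,e₂] = β₃e_{j+2} + ⋯ + β_{n+1-j}eₙ` for `3 ≤ j ≤ n-2`. -/
noncomputable def cSLb (n : ℕ) (β : ℕ → ℂ) (γ : ℂ) : Fin n → Fin n → Fin n → ℂ :=
  fun i j k =>
  if j.val = 0 then
    (if i.val = 0 ∧ k.val = 2 then 1
     else if 2 ≤ i.val ∧ i.val ≤ n - 2 ∧ k.val = i.val + 1 then 1
     else 0)
  else if j.val = 1 then
    (if i.val = 0 ∧ 3 ≤ k.val then β k.val
     else if i.val = 1 ∧ k.val = n - 1 then γ
     else if 2 ≤ i.val ∧ i.val ≤ n - 3 ∧ i.val + 2 ≤ k.val then β (k.val - i.val + 1)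
     else 0)
  else 0

/-!
When all parameters vanish, the product is `[x, y] = φ(y) • T x`, where `φ` is the first coordinate
and `T` is right multiplication by `e₁`. A linear map `d` is then a derivation exactly when
`d ∘ T - T ∘ d = φ(d e₁) • T`: such a `d` preserves `range T + ker T = ker φ`, so that
`φ ∘ d = φ(d e₁) • φ` comes for free. The map `T` is nilpotent, with one Jordan chain
`e₁ ↦ e₃ ↦ e₄ ↦ ⋯ ↦ eₙ ↦ 0` and the extra kernel vector `e₂`. Hence `d` is determined by `d e₁`,
an arbitrary vector, and `d e₂`, an arbitrary element of `ker T = ⟨e₂, eₙ⟩`, which makes `n + 2`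
free parameters.
-/

section ScaledCentralizer

variable {R V : Type*} [CommRing R] [AddCommGroup V] [Module R V]

/-- The endomorphisms `d` whose commutator with `T` is the multiple `φ (d e) • T` of `T`; when
`φ e = 1` and `ker φ = range T + ker T`, they are the derivations of the multiplication
`(x, y) ↦ φ y • T x`. -/
def scaledCentralizer (φ : Module.Dual R V) (e : V) (T : Module.End R V) :
    Submodule R (Module.End R V) where
  carrier := {d | ∀ x, d (T x) = T (d x) + φ (d e) • T x}
  add_mem' {d d'} hd hd' x := by
    simp only [LinearMap.add_apply, hd x, hd' x, map_add]
    module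
  zero_mem' x := by simp
  smul_mem' c d hd x := by
    simp only [LinearMap.smul_apply, hd x, map_smul, smul_add, smul_eq_mul, mul_smul]

variable {φ : Module.Dual R V} {e : V} {T d : Module.End R V}

lemma apply_mem_ker_of_mem_scaledCentralizer (hd : d ∈ scaledCentralizer φ e T) {x : V}
    (hx : x ∈ LinearMap.ker T) : d x ∈ LinearMap.ker T := by
  rw [LinearMap.mem_ker] at hx ⊢
  simpa [hx] using (hd x).symm

lemma apply_mem_range_of_mem_scaledCentralizer (hd : d ∈ scaledCentralizer φ e T) {x : V}
    (hx : x ∈ LinearMap.range T) : d x ∈ LinearMap.range T := by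
  obtain ⟨y, rfl⟩ := hx
  exact ⟨d y + φ (d e) • y, by rw [hd y, map_add, map_smul]⟩

lemma apply_pow_of_mem_scaledCentralizer (hd : d ∈ scaledCentralizer φ e T) (k : ℕ) (x : V) :
    d ((T ^ k) x) = (T ^ k) (d x) + (k * φ (d e)) • (T ^ k) x := by
  induction k with
  | zero => simp
  | succ k ih =>
    rw [pow_succ', Module.End.mul_apply, Module.End.mul_apply, hd, ih, map_add, map_smul]
    push_cast
    module

lemma apply_eq_mul_of_mem_scaledCentralizer (he : φ e = 1)
    (hker : LinearMap.ker φ = LinearMap.range T ⊔ LinearMap.ker T)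
    (hd : d ∈ scaledCentralizer φ e T) (y : V) : φ (d y) = φ y * φ (d e) := by
  have map_ker_le : LinearMap.ker φ ≤ (LinearMap.ker φ).comap d := by
    rw [hker]
    refine sup_le (fun x hx => ?_) (fun x hx => ?_)
    · exact Submodule.mem_sup_left (apply_mem_range_of_mem_scaledCentralizer hd hx)
    · exact Submodule.mem_sup_right (apply_mem_ker_of_mem_scaledCentralizer hd hx)
  have sub_mem : y - φ y • e ∈ LinearMap.ker φ := by simp [he]
  simpa [sub_eq_zero] using map_ker_le sub_mem

lemma leibniz_iff_mem_scaledCentralizer (he : φ e = 1)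
    (hker : LinearMap.ker φ = LinearMap.range T ⊔ LinearMap.ker T) :
    (∀ x y, d (φ y • T x) = φ y • T (d x) + φ (d y) • T x) ↔ d ∈ scaledCentralizer φ e T := by
  refine ⟨fun h x => by simpa [he] using h x e, fun hd x y => ?_⟩
  rw [map_smul, hd x, apply_eq_mul_of_mem_scaledCentralizer he hker hd y, smul_add, mul_smul]

end ScaledCentralizer

/-- The basis `b` is a Jordan basis of hook type for `T`: it consists of one Jordan chain
`b (inl 0) ↦ b (inl 1) ↦ ⋯ ↦ b (inl m) ↦ 0` and of the vectors `b (inr i)`, which `T` kills. -/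
structure IsHookJordanBasis {R V ι : Type*} [CommRing R] [AddCommGroup V] [Module R V] {m : ℕ}
    (T : Module.End R V) (b : Module.Basis (Fin (m + 1) ⊕ ι) R V) : Prop where
  map_inl_castSucc (k : Fin m) : T (b (.inl k.castSucc)) = b (.inl k.succ)
  map_inl_last : T (b (.inl (Fin.last m))) = 0
  map_inr (i : ι) : T (b (.inr i)) = 0

namespace IsHookJordanBasis

section CommRing

variable {R V ι : Type*} [CommRing R] [AddCommGroup V] [Module R V] {m : ℕ}
  {T : Module.End R V} {b : Module.Basis (Fin (m + 1) ⊕ ι) R V}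

lemma pow_apply_inl_zero (h : IsHookJordanBasis T b) (k : Fin (m + 1)) :
    (T ^ (k : ℕ)) (b (.inl 0)) = b (.inl k) := by
  induction k using Fin.induction with
  | zero => simp
  | succ k ih =>
    rw [Fin.val_succ, pow_succ', Module.End.mul_apply, ← Fin.val_castSucc, ih, h.map_inl_castSucc]

lemma pow_eq_zero (h : IsHookJordanBasis T b) : T ^ (m + 1) = 0 := by
  have pow_apply_zero : (T ^ (m + 1)) (b (.inl 0)) = 0 := by
    have pow_apply_eq_last := h.pow_apply_inl_zero (Fin.last m)
    rw [Fin.val_last] at pow_apply_eq_last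
    rw [pow_succ', Module.End.mul_apply, pow_apply_eq_last, h.map_inl_last]
  refine b.ext fun j => ?_
  rcases j with k | i
  · rw [← h.pow_apply_inl_zero k, ← Module.End.mul_apply, ← pow_add, add_comm, pow_add,
      Module.End.mul_apply, pow_apply_zero, map_zero, LinearMap.zero_apply]
  · rw [pow_succ, Module.End.mul_apply, h.map_inr, map_zero, LinearMap.zero_apply]

lemma coord_inl_zero_map (h : IsHookJordanBasis T b) (x : V) : b.coord (.inl 0) (T x) = 0 := by
  suffices b.coord (.inl 0) ∘ₗ T = 0 from LinearMap.congr_fun this x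
  refine b.ext fun j => ?_
  rcases j with k | i
  · induction k using Fin.lastCases with
    | last => simp [h.map_inl_last]
    | cast k => simp [h.map_inl_castSucc]
  · simp [h.map_inr]

lemma coord_inl_succ_map (h : IsHookJordanBasis T b) (k : Fin m) (x : V) :
    b.coord (.inl k.succ) (T x) = b.coord (.inl k.castSucc) x := by
  suffices b.coord (.inl k.succ) ∘ₗ T = b.coord (.inl k.castSucc) from LinearMap.congr_fun this x
  refine b.ext fun j => ?_
  rcases j with l | i
  · induction l using Fin.lastCases with
    | last => simp [h.map_inl_last]
    | cast l => classical simp [h.map_inl_castSucc, Finsupp.single_apply]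
  · simp [h.map_inr]

lemma ker_coord_inl_zero [NeZero m] (h : IsHookJordanBasis T b) :
    LinearMap.ker (b.coord (.inl 0)) = LinearMap.range T ⊔ LinearMap.ker T := by
  refine le_antisymm (fun x hx => ?_) (sup_le ?_ fun x hx => ?_)
  · set S := LinearMap.range T ⊔ LinearMap.ker T
    -- Modulo `S` every basis vector other than `b (inl 0)` vanishes.
    have mkQ_eq : S.mkQ = (b.coord (.inl 0)).smulRight (S.mkQ (b (.inl 0))) := by
      refine b.ext fun j => ?_
      rcases j with k | i
      · cases k using Fin.cases with
        | zero => simp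
        | succ k =>
          have : b (.inl k.succ) ∈ S := Submodule.mem_sup_left ⟨_, h.map_inl_castSucc k⟩
          simpa [Finsupp.single_apply] using this
      · have : b (.inr i) ∈ S := Submodule.mem_sup_right (h.map_inr i)
        simpa using this
    rw [← S.ker_mkQ, LinearMap.mem_ker, mkQ_eq, LinearMap.smulRight_apply,
      LinearMap.mem_ker.mp hx, zero_smul]
  · rintro _ ⟨x, rfl⟩
    exact h.coord_inl_zero_map x
  · have := h.coord_inl_succ_map 0 x
    rw [LinearMap.mem_ker.mp hx, map_zero] at this
    simpa using this.symm

lemma range_eq_span (h : IsHookJordanBasis T b) :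
    LinearMap.range T = Submodule.span R (Set.range fun k : Fin m => b (.inl k.succ)) := by
  refine le_antisymm ?_ (Submodule.span_le.mpr ?_)
  · rw [LinearMap.range_eq_map, ← b.span_eq, Submodule.map_span_le]
    rintro _ ⟨k | i, rfl⟩
    · induction k using Fin.lastCases with
      | last => simp [h.map_inl_last]
      | cast k => exact h.map_inl_castSucc k ▸ Submodule.subset_span ⟨k, rfl⟩
    · simp [h.map_inr]
  · rintro _ ⟨k, rfl⟩
    exact ⟨_, h.map_inl_castSucc k⟩

lemma finrank_range [Nontrivial R] (h : IsHookJordanBasis T b) :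
    Module.finrank R (LinearMap.range T) = m := by
  have linearIndependent : LinearIndependent R fun k : Fin m => b (.inl k.succ) :=
    b.linearIndependent.comp _ (Sum.inl_injective.comp (Fin.succ_injective m))
  rw [h.range_eq_span, finrank_span_eq_card linearIndependent, Fintype.card_fin]

/-- The endomorphism in the scaled centralizer of `T` that takes the value `a` at the head of the
Jordan chain and the values `w i` at the remaining basis vectors; the values along the chain are
those forced by `apply_pow_of_mem_scaledCentralizer`. -/
noncomputable def extension (T : Module.End R V) (b : Module.Basis (Fin (m + 1) ⊕ ι) R V) (a : V)
    (w : ι → LinearMap.ker T) : Module.End R V :=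
  b.constr R (Sum.elim
    (fun k => (T ^ (k : ℕ)) a + ((k : ℕ) * b.coord (.inl 0) a) • b (.inl k)) (fun i => w i))

lemma extension_inl_zero (a : V) (w : ι → LinearMap.ker T) :
    extension T b a w (b (.inl 0)) = a := by
  simp [extension]

lemma extension_inr (a : V) (w : ι → LinearMap.ker T) (i : ι) :
    extension T b a w (b (.inr i)) = w i := by
  simp [extension]

lemma extension_pow_apply (h : IsHookJordanBasis T b) (a : V) (w : ι → LinearMap.ker T) (k : ℕ) :
    extension T b a w ((T ^ k) (b (.inl 0))) =
      (T ^ k) a + (k * b.coord (.inl 0) a) • (T ^ k) (b (.inl 0)) := by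
  rcases lt_or_ge k (m + 1) with hk | hk
  · rw [h.pow_apply_inl_zero ⟨k, hk⟩]
    simp [extension]
  · simp [pow_eq_zero_of_le hk h.pow_eq_zero]

lemma extension_mem_scaledCentralizer (h : IsHookJordanBasis T b) (a : V)
    (w : ι → LinearMap.ker T) :
    extension T b a w ∈ scaledCentralizer (b.coord (.inl 0)) (b (.inl 0)) T := by
  set d := extension T b a w with hd
  suffices d ∘ₗ T = T ∘ₗ d + b.coord (.inl 0) (d (b (.inl 0))) • T from LinearMap.congr_fun this
  refine b.ext fun j => ?_
  simp only [LinearMap.comp_apply, LinearMap.add_apply, LinearMap.smul_apply]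
  rw [hd, extension_inl_zero]
  rcases j with k | i
  · rw [← h.pow_apply_inl_zero k, ← Module.End.mul_apply T, ← pow_succ', h.extension_pow_apply,
      h.extension_pow_apply, pow_succ', map_add, map_smul, Module.End.mul_apply,
      Module.End.mul_apply]
    push_cast
    module
  · rw [extension_inr, h.map_inr, (w i).2, map_zero, smul_zero, add_zero]

lemma eq_extension (h : IsHookJordanBasis T b) {d : Module.End R V}
    (hd : d ∈ scaledCentralizer (b.coord (.inl 0)) (b (.inl 0)) T) {w : ι → LinearMap.ker T}
    (hw : ∀ i, d (b (.inr i)) = w i) : d = extension T b (d (b (.inl 0))) w := by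
  refine b.ext fun j => ?_
  rcases j with k | i
  · rw [← h.pow_apply_inl_zero k, apply_pow_of_mem_scaledCentralizer hd, h.extension_pow_apply]
  · rw [hw, extension_inr]

/-- An element of the scaled centralizer of `T` amounts to its values at the basis vectors outside
the image of `T`: an arbitrary vector at the head of the Jordan chain, and elements of `ker T` at
the vectors killed by `T`. -/
noncomputable def scaledCentralizerEquiv (h : IsHookJordanBasis T b) :
    scaledCentralizer (b.coord (.inl 0)) (b (.inl 0)) T ≃ₗ[R] V × (ι → LinearMap.ker T) where
  toFun d := (d.1 (b (.inl 0)),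
    fun i => ⟨d.1 (b (.inr i)), apply_mem_ker_of_mem_scaledCentralizer d.2 (h.map_inr i)⟩)
  map_add' _ _ := rfl
  map_smul' _ _ := rfl
  invFun p := ⟨extension T b p.1 p.2, h.extension_mem_scaledCentralizer p.1 p.2⟩
  left_inv d := Subtype.ext (h.eq_extension d.2 fun _ => rfl).symm
  right_inv p := by
    ext
    · exact extension_inl_zero p.1 p.2
    · exact extension_inr p.1 p.2 _

end CommRing

section Field

variable {K V ι : Type*} [Field K] [AddCommGroup V] [Module K V] [Fintype ι] {m : ℕ}
  {T : Module.End K V} {b : Module.Basis (Fin (m + 1) ⊕ ι) K V}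

lemma finrank_ker (h : IsHookJordanBasis T b) :
    Module.finrank K (LinearMap.ker T) = Fintype.card ι + 1 := by
  have : FiniteDimensional K V := b.finiteDimensional_of_finite
  have rank_nullity := T.finrank_range_add_finrank_ker
  rw [h.finrank_range, Module.finrank_eq_card_basis b, Fintype.card_sum, Fintype.card_fin]
    at rank_nullity
  omega

theorem finrank_scaledCentralizer (h : IsHookJordanBasis T b) :
    Module.finrank K (scaledCentralizer (b.coord (.inl 0)) (b (.inl 0)) T) =
      m + 1 + Fintype.card ι + Fintype.card ι * (Fintype.card ι + 1) := by
  have : FiniteDimensional K V := b.finiteDimensional_of_finite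
  rw [h.scaledCentralizerEquiv.finrank_eq, Module.finrank_prod, Module.finrank_pi_fintype,
    Module.finrank_eq_card_basis b, h.finrank_ker]
  simp

end Field

end IsHookJordanBasis

lemma derivations_eq_scaledCentralizer {n : ℕ}
    {μ : (Fin n → ℂ) →ₗ[ℂ] (Fin n → ℂ) →ₗ[ℂ] (Fin n → ℂ)} {φ : Module.Dual ℂ (Fin n → ℂ)}
    {e : Fin n → ℂ} {T : Module.End ℂ (Fin n → ℂ)} (hμ : ∀ x y, μ x y = φ y • T x) (he : φ e = 1)
    (hker : LinearMap.ker φ = LinearMap.range T ⊔ LinearMap.ker T) :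
    derivations n μ = scaledCentralizer φ e T := by
  ext d
  rw [← leibniz_iff_mem_scaledCentralizer he hker]
  simp only [← hμ]
  rfl

lemma structMul_single_single {n : ℕ} (c : Fin n → Fin n → Fin n → ℂ) (i j : Fin n) :
    structMul n c (Pi.single i 1) (Pi.single j 1) = c i j := by
  funext k
  simp [structMul, Pi.single_apply]

lemma structMul_eq_smul_of_forall_ne {n : ℕ} {c : Fin n → Fin n → Fin n → ℂ} {j₀ : Fin n}
    (hc : ∀ i j, j ≠ j₀ → c i j = 0) (x y : Fin n → ℂ) :
    structMul n c x y = y j₀ • structMul n c x (Pi.single j₀ 1) := by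
  funext k
  simp only [structMul, LinearMap.mk₂_apply, Pi.smul_apply, smul_eq_mul, Finset.mul_sum]
  refine Finset.sum_congr rfl fun i _ => ?_
  rw [Finset.sum_eq_single_of_mem j₀ (Finset.mem_univ _) fun j _ hj => by simp [hc i j hj],
    Finset.sum_eq_single_of_mem j₀ (Finset.mem_univ _) fun j _ hj => by simp [hc i j hj],
    Pi.single_eq_same]
  ring

lemma cSLb_eq_zero_of_ne_zero {n : ℕ} [NeZero n] {β : ℕ → ℂ} {γ : ℂ} (hγ : γ = 0)
    (hβ : ∀ i, 3 ≤ i → i ≤ n - 1 → β i = 0) (i : Fin n) {j : Fin n} (hj : j ≠ 0) :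
    cSLb n β γ i j = 0 := by
  funext k
  have hj' : j.val ≠ 0 := Fin.val_ne_zero_iff.mpr hj
  simp only [cSLb, if_neg hj', Pi.zero_apply]
  split_ifs
  · exact hβ _ (by omega) (by omega)
  · exact hγ
  · exact hβ _ (by omega) (by omega)
  all_goals rfl

lemma val_succAbove_one (m : ℕ) (k : Fin (m + 1)) :
    (Fin.succAbove 1 k : Fin (m + 2)).val = if k.val = 0 then 0 else k.val + 1 := by
  cases k using Fin.cases <;> simp

/-- The standard basis in the order `e₁, e₃, e₄, …, eₙ; e₂`, for `n = m + 2`. -/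
noncomputable def chainBasis (m : ℕ) : Module.Basis (Fin (m + 1) ⊕ Unit) ℂ (Fin (m + 2) → ℂ) :=
  (Pi.basisFun ℂ (Fin (m + 2))).reindex
    ((finSuccEquiv' 1).trans (Equiv.optionEquivSumPUnit (Fin (m + 1))))

lemma chainBasis_inl (m : ℕ) (k : Fin (m + 1)) :
    chainBasis m (.inl k) = Pi.single (Fin.succAbove 1 k) 1 := by
  simp [chainBasis]

lemma chainBasis_inr (m : ℕ) (i : Unit) : chainBasis m (.inr i) = Pi.single 1 1 := by
  simp [chainBasis]

lemma chainBasis_coord_inl_zero (m : ℕ) (x : Fin (m + 2) → ℂ) :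
    (chainBasis m).coord (.inl 0) x = x 0 := by
  rw [Module.Basis.coord_apply, chainBasis, Module.Basis.repr_reindex_apply]
  simp

lemma isHookJordanBasis_chainBasis (m : ℕ) (β : ℕ → ℂ) (γ : ℂ) :
    IsHookJordanBasis ((structMul (m + 2) (cSLb (m + 2) β γ)).flip (Pi.single 0 1))
      (chainBasis m) where
  map_inl_castSucc k := by
    rw [LinearMap.flip_apply, chainBasis_inl, chainBasis_inl, structMul_single_single]
    funext j
    simp only [cSLb, Pi.single_apply, Fin.ext_iff, Fin.val_zero, val_succAbove_one]
    grind
  map_inl_last := by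
    rw [LinearMap.flip_apply, chainBasis_inl, structMul_single_single]
    funext j
    simp only [cSLb, Pi.zero_apply, Fin.val_zero, val_succAbove_one]
    grind
  map_inr i := by
    rw [LinearMap.flip_apply, chainBasis_inr, structMul_single_single]
    funext j
    simp [cSLb]

theorem dim_der_SLb_case1_general (n : ℕ) (hn : 3 ≤ n) (β : ℕ → ℂ) (γ : ℂ)
    (hγ : γ = 0) (hβ : ∀ i, 3 ≤ i → i ≤ n - 1 → β i = 0) :
    Module.finrank ℂ (derivations n (structMul n (cSLb n β γ))) = n + 2 := by
  obtain ⟨m, rfl⟩ : ∃ m, n = m + 1 + 2 := Nat.exists_eq_add_of_le' hn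
  have hook := isHookJordanBasis_chainBasis (m + 1) β γ
  have mul_eq (x y) : structMul _ (cSLb (m + 1 + 2) β γ) x y =
      (chainBasis (m + 1)).coord (.inl 0) y •
        (structMul _ (cSLb (m + 1 + 2) β γ)).flip (Pi.single 0 1) x := by
    rw [chainBasis_coord_inl_zero, LinearMap.flip_apply]
    exact structMul_eq_smul_of_forall_ne (fun i j => cSLb_eq_zero_of_ne_zero hγ hβ i) x y
  rw [derivations_eq_scaledCentralizer mul_eq (e := chainBasis (m + 1) (.inl 0)) (by simp)
    hook.ker_coord_inl_zero, hook.finrank_scaledCentralizer, Fintype.card_unit]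

theorem dim_der_SLb_case1 (n : ℕ) (hn : 5 ≤ n) (β : ℕ → ℂ) (γ : ℂ)
    (hγ : γ = 0) (hβ : ∀ i, 3 ≤ i → i ≤ n - 1 → β i = 0) :
    Module.finrank ℂ (derivations n (structMul n (cSLb n β γ))) = n + 2 := by
  exact dim_der_SLb_case1_general n (by omega) β γ hγ hβ
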